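/- For every real k with k < −4 or k > 2, the cubic polynomial f(x) = 4x³ + (k² − 4)x² − 2kx + 1 has three distinct real roots e₁ < e₂ < e₃, and these satisfy |e₁| > 1, |e₂| < 1 and |e₃| < 1 (so the circle |x| = 1 encloses e₂ and e₃ but not e₁). -/

import Mathlib

/-- A real cubic with three distinct roots splits as the product of its linear factors. -/
theorem cubic_eq_prod_of_roots {p q r s a b c : ℝ} (hab : a ≠ b) (hbc : b ≠ c) (hac : a ≠ c)
    (ha : p * a ^ 3 + q * a ^ 2 + r * a + s = 0) (hb : p * b ^ 3 + q * b ^ 2 + r * b + s = 0)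
    (hc : p * c ^ 3 + q * c ^ 2 + r * c + s = 0) (x : ℝ) :
    p * x ^ 3 + q * x ^ 2 + r * x + s = p * (x - a) * (x - b) * (x - c) := by
  have h₁ : p * (a ^ 2 + a * b + b ^ 2) + q * (a + b) + r = 0 :=
    mul_left_cancel₀ (sub_ne_zero.2 hab) (by linear_combination ha - hb)
  have h₂ : p * (a ^ 2 + a * c + c ^ 2) + q * (a + c) + r = 0 :=
    mul_left_cancel₀ (sub_ne_zero.2 hac) (by linear_combination ha - hc)
  have h₃ : p * (a + b + c) + q = 0 :=
    mul_left_cancel₀ (sub_ne_zero.2 hbc) (by linear_combination h₁ - h₂)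
  linear_combination ha + (x - a) * h₁ + (x - a) * (x - b) * h₃

/-- For real `k` with `k < −4` or `k > 2`, the cubic
`f(x) = 4x³ + (k² − 4)x² − 2kx + 1` has three distinct real roots
`e₁ < e₂ < e₃`, with `|e₁| > 1`, `|e₂| < 1` and `|e₃| < 1`. -/
theorem cubic_three_real_roots (k : ℝ) (hk : k < -4 ∨ 2 < k) :
    ∃ e₁ e₂ e₃ : ℝ, e₁ < e₂ ∧ e₂ < e₃ ∧
      (∀ x : ℝ, 4 * x ^ 3 + (k ^ 2 - 4) * x ^ 2 - 2 * k * x + 1 =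
        4 * (x - e₁) * (x - e₂) * (x - e₃)) ∧
      1 < |e₁| ∧ |e₂| < 1 ∧ |e₃| < 1 := by
  set f : ℝ → ℝ := fun x => 4 * x ^ 3 + (k ^ 2 - 4) * x ^ 2 + -2 * k * x + 1 with hf
  have hcont : Continuous f := by fun_prop
  have hk0 : k ≠ 0 := by rintro rfl; norm_num at hk
  have hk4 : 4 < k ^ 2 := by rcases hk with h | h <;> nlinarith
  have hinv : |k⁻¹| < 1 := by
    rw [abs_inv]
    exact inv_lt_one_of_one_lt₀ (by rw [← one_lt_sq_iff_one_lt_abs]; linarith)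
  obtain ⟨hinv_left, hinv_right⟩ := abs_lt.1 hinv
  have hneg : f (-k ^ 2) < 0 := by
    have : f (-k ^ 2) = -3 * (k ^ 2) ^ 3 - 4 * (k ^ 2) ^ 2 + 2 * k * k ^ 2 + 1 := by
      simp only [hf]; ring
    rw [this]
    nlinarith [sq_nonneg (k - 1), pow_pos (show 0 < k ^ 2 by linarith) 3]
  have hleft : 0 < f (-1) := by
    simp only [hf]
    rcases hk with h | h <;> nlinarith
  have hmid : f k⁻¹ < 0 := by
    have : f k⁻¹ = 4 * (k * (1 - k)) / (k ^ 2) ^ 2 := by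
      simp only [hf]; field_simp; ring
    rw [this]
    refine div_neg_of_neg_of_pos ?_ (by positivity)
    rcases hk with h | h <;> nlinarith
  have hright : 0 < f 1 := by
    simp only [hf]
    rcases hk with h | h <;> nlinarith
  obtain ⟨a, ⟨-, ha⟩, hfa⟩ :=
    intermediate_value_Ioo (by linarith : -k ^ 2 ≤ -1) hcont.continuousOn ⟨hneg, hleft⟩
  obtain ⟨b, ⟨hb, hb'⟩, hfb⟩ :=
    intermediate_value_Ioo' hinv_left.le hcont.continuousOn ⟨hmid, hleft⟩
  obtain ⟨c, ⟨hc, hc'⟩, hfc⟩ :=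
    intermediate_value_Ioo hinv_right.le hcont.continuousOn ⟨hmid, hright⟩
  have hab : a < b := ha.trans hb
  have hbc : b < c := hb'.trans hc
  refine ⟨a, b, c, hab, hbc, fun x => ?_, ?_, abs_lt.2 ⟨hb, by linarith⟩,
    abs_lt.2 ⟨by linarith, hc'⟩⟩
  · rw [← cubic_eq_prod_of_roots hab.ne hbc.ne (hab.trans hbc).ne hfa hfb hfc x]
    ring
  · exact lt_abs.2 (Or.inr (by linarith))
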